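/- Let (X,d) be a complete semimetric space with a triangle function Φ satisfying Condition (1) and Condition (2), and suppose the semimetric d is continuous (if d(y_n, y) → 0 then d(x, y_n) → d(x, y) for every x). Let (x_n) be a sequence in X with d(x_n, x_{n+1}) ≤ α·d(x_{n-1}, x_n) for all n ≥ 1, where α ∈ [0,1), and let x* be its limit. Then d(x_n, x*) ≤ α^n·C(α)·d(x_0, x_1) for all n, where C(α) is the constant from Condition (2). -/

import Mathlib

/-!
Set `c = α ^ n * d (x 0) (x 1)`. Contractivity bounds consecutive distances geometrically,
`d (x (n + k)) (x (n + k + 1)) ≤ c * α ^ k`, so iterating the generalized triangle inequality and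
pulling the factor `c` out of `Φ` by homogeneity gives
`d (x n) (x (n + m + 1)) ≤ c * nestPhi Φ α 0 m ≤ c * C α`. Continuity of `d` lets `m → ∞`.
-/

open NNReal Filter Topology

/-- A semimetric on `X`: `d x y = 0` iff `x = y`, and `d` is symmetric. -/
def IsSemimetric {X : Type*} (d : X → X → ℝ≥0) : Prop :=
  (∀ x y, d x y = 0 ↔ x = y) ∧ (∀ x y, d x y = d y x)

/-- `Φ` is a triangle function for the semimetric `d`: symmetric, nondecreasing in both
arguments, `Φ 0 0 = 0`, and the generalized triangle inequality holds. -/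
def IsTriangleFn {X : Type*} (d : X → X → ℝ≥0) (Φ : ℝ≥0 → ℝ≥0 → ℝ≥0) : Prop :=
  (∀ u v, Φ u v = Φ v u) ∧
  (∀ u₁ u₂ v₁ v₂, u₁ ≤ u₂ → v₁ ≤ v₂ → Φ u₁ v₁ ≤ Φ u₂ v₂) ∧
  Φ 0 0 = 0 ∧
  (∀ x y z : X, d x y ≤ Φ (d x z) (d z y))

/-- Condition (1): `Φ (k*u) (k*v) = k * Φ u v`. -/
def Cond1 (Φ : ℝ≥0 → ℝ≥0 → ℝ≥0) : Prop :=
  ∀ k u v : ℝ≥0, Φ (k * u) (k * v) = k * Φ u v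

/-- `nestPhi Φ a k m` is `Φ (a^k, Φ (a^(k+1), …, Φ (a^(k+m-1), a^(k+m))))`;
in particular `nestPhi Φ a 0 p = Φ (1, Φ (a, Φ (a², …, Φ (a^(p-1), a^p))))`. -/
def nestPhi (Φ : ℝ≥0 → ℝ≥0 → ℝ≥0) (a : ℝ≥0) : ℕ → ℕ → ℝ≥0
  | k, 0 => a ^ k
  | k, m + 1 => Φ (a ^ k) (nestPhi Φ a (k + 1) m)

/-- Condition (2): for every `a ∈ [0,1)` there is `C(a) > 0` bounding all nested expressions. -/
def Cond2 (Φ : ℝ≥0 → ℝ≥0 → ℝ≥0) : Prop :=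
  ∀ a : ℝ≥0, a < 1 → ∃ C : ℝ≥0, 0 < C ∧ ∀ p : ℕ, 1 ≤ p → nestPhi Φ a 0 p ≤ C

/-- `(x n)` is a Cauchy sequence for the semimetric `d`. -/
def IsCauchySeq {X : Type*} (d : X → X → ℝ≥0) (x : ℕ → X) : Prop :=
  ∀ ε : ℝ≥0, 0 < ε → ∃ N : ℕ, ∀ m n : ℕ, N ≤ m → N ≤ n → d (x m) (x n) < ε

/-- The semimetric space `(X, d)` is complete: every Cauchy sequence has a limit. -/
def IsCompleteSemimetric {X : Type*} (d : X → X → ℝ≥0) : Prop :=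
  ∀ x : ℕ → X, IsCauchySeq d x → ∃ x₀ : X, Tendsto (fun n => d (x n) x₀) atTop (𝓝 0)

theorem dist_succ_le_pow {X : Type*} (d : X → X → ℝ≥0) (x : ℕ → X) (α : ℝ≥0)
    (hx : ∀ n : ℕ, d (x (n + 1)) (x (n + 2)) ≤ α * d (x n) (x (n + 1))) (n : ℕ) :
    d (x n) (x (n + 1)) ≤ α ^ n * d (x 0) (x 1) := by
  induction n with
  | zero => simp
  | succ n ih =>
    calc d (x (n + 1)) (x (n + 2)) ≤ α * d (x n) (x (n + 1)) := hx n
      _ ≤ α * (α ^ n * d (x 0) (x 1)) := by gcongr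
      _ = α ^ (n + 1) * d (x 0) (x 1) := by ring

/-- The offset `k` is free because the recursion of `nestPhi` shifts its starting exponent; the
scale `α ^ n` stays outside, so that `k = 0` yields the expression bounded in Condition (2). -/
theorem dist_le_nestPhi {X : Type*} (d : X → X → ℝ≥0) (Φ : ℝ≥0 → ℝ≥0 → ℝ≥0)
    (hΦ : IsTriangleFn d Φ) (h1 : Cond1 Φ) (x : ℕ → X) (α : ℝ≥0)
    (hx : ∀ n : ℕ, d (x (n + 1)) (x (n + 2)) ≤ α * d (x n) (x (n + 1))) (n m k : ℕ) :
    d (x (n + k)) (x (n + k + m + 1)) ≤ α ^ n * d (x 0) (x 1) * nestPhi Φ α k m := by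
  obtain ⟨-, hmono, -, htri⟩ := hΦ
  have hstep (k : ℕ) : d (x (n + k)) (x (n + k + 1)) ≤ α ^ n * d (x 0) (x 1) * α ^ k :=
    (dist_succ_le_pow d x α hx (n + k)).trans_eq (by ring)
  induction m generalizing k with
  | zero => exact hstep k
  | succ m ih =>
    have hrest := ih (k + 1)
    rw [show n + (k + 1) + m + 1 = n + k + (m + 1) + 1 by ring] at hrest
    rw [nestPhi, ← h1]
    exact (htri _ _ (x (n + k + 1))).trans (hmono _ _ _ _ (hstep k) hrest)

theorem stmt_1 {X : Type*} (d : X → X → ℝ≥0) (Φ : ℝ≥0 → ℝ≥0 → ℝ≥0)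
    (hd : IsSemimetric d) (hΦ : IsTriangleFn d Φ) (h1 : Cond1 Φ)
    (C : ℝ≥0 → ℝ≥0)
    (h2 : ∀ a : ℝ≥0, a < 1 → 0 < C a ∧ ∀ p : ℕ, 1 ≤ p → nestPhi Φ a 0 p ≤ C a)
    (hcomp : IsCompleteSemimetric d)
    (hdcont : ∀ (y : ℕ → X) (y₀ x₀ : X),
      Tendsto (fun n => d (y n) y₀) atTop (𝓝 0) →
        Tendsto (fun n => d x₀ (y n)) atTop (𝓝 (d x₀ y₀)))
    (x : ℕ → X) (α : ℝ≥0) (hα : α < 1)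
    (hx : ∀ n : ℕ, d (x (n + 1)) (x (n + 2)) ≤ α * d (x n) (x (n + 1)))
    (xstar : X) (hlim : Tendsto (fun n => d (x n) xstar) atTop (𝓝 0)) :
    ∀ n : ℕ, d (x n) xstar ≤ α ^ n * C α * d (x 0) (x 1) := by
  intro n
  -- Condition (2) only covers `p ≥ 1`, hence the shift by two.
  have hshift : Tendsto (fun m => d (x (n + (m + 1) + 1)) xstar) atTop (𝓝 0) := by
    refine hlim.comp (tendsto_atTop_mono (fun m => ?_) tendsto_id)
    simp only [id]
    omega
  refine le_of_tendsto' (hdcont _ xstar (x n) hshift) fun m => ?_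
  calc d (x n) (x (n + (m + 1) + 1))
      ≤ α ^ n * d (x 0) (x 1) * nestPhi Φ α 0 (m + 1) :=
        dist_le_nestPhi d Φ hΦ h1 x α hx n (m + 1) 0
    _ ≤ α ^ n * d (x 0) (x 1) * C α := by
        gcongr
        exact (h2 α hα).2 (m + 1) (by omega)
    _ = α ^ n * C α * d (x 0) (x 1) := by ring
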